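/- arXiv:1901.07778 — 3 statements merged into one kernel-verified Lean document; each statement's English description precedes it below -/
import Mathlib

section
/- Let φ : ℝ^d → (0,∞) be continuous, let (μ_n) be a sequence of finite signed Borel measures on ℝ^d converging weakly to a finite signed Borel measure μ (i.e. ∫ ψ dμ_n → ∫ ψ dμ for every bounded continuous ψ : ℝ^d → ℝ), and assume φ is integrable with respect to the total variation measure |μ|. Then ‖μ‖_φ ≤ liminf_{n→∞} ‖μ_n‖_φ. -/
open MeasureTheory Filter
open scoped Topology BoundedContinuousFunction

/-!
Suppose first that the weight is the indicator of an open set `U`. If `|ψ| ≤ 1_U`, then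
`∫ ψ dσ ≤ |σ|(U)` for every signed measure `σ`. Conversely, approximating the two Hahn pieces of `U`
from inside by closed sets and separating these by Urysohn's lemma yields continuous `ψ` with
`|ψ| ≤ 1_U` and `∫ ψ dν` as close to `|ν|(U)` as desired. So `|ν|(U)` is a supremum of weakly
continuous functionals, and `|ν|(U) ≤ liminf |μ_n|(U)`. A general weight `φ` is the superposition
`∫₀^∞ 1_{t < φ} dt` of indicators of open sets, and Fatou's lemma in `t` concludes.
-/

lemma exists_boundedContinuous_eqOn_one_eqOn_neg_one {X : Type*} [TopologicalSpace X]
    [NormalSpace X] {F G U : Set X} (hF : IsClosed F) (hG : IsClosed G) (hU : IsOpen U)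
    (hFG : Disjoint F G) (hFU : F ⊆ U) (hGU : G ⊆ U) :
    ∃ ψ : X →ᵇ ℝ, Set.EqOn ψ 1 F ∧ Set.EqOn ψ (-1) G ∧ ∀ x, |ψ x| ≤ U.indicator 1 x := by
  have hF_disj : Disjoint (G ∪ Uᶜ) F :=
    Set.disjoint_union_left.2 ⟨hFG.symm, (Set.disjoint_compl_right_iff_subset.2 hFU).symm⟩
  have hG_disj : Disjoint (F ∪ Uᶜ) G :=
    Set.disjoint_union_left.2 ⟨hFG, (Set.disjoint_compl_right_iff_subset.2 hGU).symm⟩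
  obtain ⟨u, hu_zero, hu_one, hu_mem⟩ :=
    exists_bounded_zero_one_of_closed (hG.union hU.isClosed_compl) hF hF_disj
  obtain ⟨v, hv_zero, hv_one, hv_mem⟩ :=
    exists_bounded_zero_one_of_closed (hF.union hU.isClosed_compl) hG hG_disj
  refine ⟨u - v, fun x hx => ?_, fun x hx => ?_, fun x => ?_⟩
  · simp [hu_one hx, hv_zero (Or.inl hx)]
  · simp [hv_one hx, hu_zero (Or.inl hx)]
  · by_cases hx : x ∈ U
    · simpa [hx] using abs_sub_le_of_le_of_le (hu_mem x).1 (hu_mem x).2 (hv_mem x).1 (hv_mem x).2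
    · simp [hx, hu_zero (Or.inr hx), hv_zero (Or.inr hx)]

section JordanIntegral

variable {X : Type*} [MeasurableSpace X]

/-- The integral of `ψ` against the signed measure `σ`, encoded through the Jordan decomposition as
`∫ ψ dσ⁺ - ∫ ψ dσ⁻`. It is meaningful when `ψ` is integrable with respect to `|σ|`. -/
noncomputable def jordanIntegral (σ : SignedMeasure X) (ψ : X → ℝ) : ℝ :=
  (∫ x, ψ x ∂σ.toJordanDecomposition.posPart) - ∫ x, ψ x ∂σ.toJordanDecomposition.negPart

lemma enorm_jordanIntegral_le_lintegral_enorm (σ : SignedMeasure X) (ψ : X → ℝ) :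
    ‖jordanIntegral σ ψ‖ₑ ≤ ∫⁻ x, ‖ψ x‖ₑ ∂σ.totalVariation := by
  rw [SignedMeasure.totalVariation, lintegral_add_measure]
  exact enorm_sub_le.trans
    (add_le_add (enorm_integral_le_lintegral_enorm ψ) (enorm_integral_le_lintegral_enorm ψ))

lemma enorm_jordanIntegral_le_totalVariation (σ : SignedMeasure X) {ψ : X → ℝ} {U : Set X}
    (hψ : ∀ x, |ψ x| ≤ U.indicator 1 x) : ‖jordanIntegral σ ψ‖ₑ ≤ σ.totalVariation U := by
  have hψ_enorm (x : X) : ‖ψ x‖ₑ ≤ U.indicator 1 x := by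
    rw [Real.enorm_eq_ofReal_abs]
    exact (ENNReal.ofReal_le_ofReal (hψ x)).trans_eq (by by_cases hx : x ∈ U <;> simp [hx])
  calc ‖jordanIntegral σ ψ‖ₑ
      ≤ ∫⁻ x, ‖ψ x‖ₑ ∂σ.totalVariation := enorm_jordanIntegral_le_lintegral_enorm σ ψ
    _ ≤ ∫⁻ x, U.indicator 1 x ∂σ.totalVariation := lintegral_mono hψ_enorm
    _ ≤ σ.totalVariation U := lintegral_indicator_one_le U

end JordanIntegral

lemma measureReal_le_integral_add_two_mul_measureReal_sdiff {X : Type*} [MeasurableSpace X]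
    {P : Measure X} [IsFiniteMeasure P] {ψ : X → ℝ} (hψ_int : Integrable ψ P) {F U : Set X}
    (hF : MeasurableSet F) (hU : MeasurableSet U) (hψ_one : Set.EqOn ψ 1 F)
    (hψ : ∀ x, -U.indicator 1 x ≤ ψ x) :
    P.real U ≤ ∫ x, ψ x ∂P + 2 * P.real (U \ F) := by
  have hψ_lower (x : X) : U.indicator 1 x - 2 * (U \ F).indicator 1 x ≤ ψ x := by
    have hx_lower := hψ x
    by_cases hxF : x ∈ F
    · by_cases hxU : x ∈ U <;> simp [hxF, hxU, hψ_one hxF]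
    by_cases hxU : x ∈ U
    · simp only [hxF, hxU, Set.indicator_of_mem, Set.mem_sdiff, not_false_eq_true, and_self,
        Pi.one_apply] at hx_lower ⊢
      linarith
    · simpa [hxU] using hx_lower
  have hU_int : Integrable (U.indicator (1 : X → ℝ)) P := (integrable_const 1).indicator hU
  have hsdiff_int : Integrable (fun x => 2 * (U \ F).indicator (1 : X → ℝ) x) P :=
    ((integrable_const 1).indicator (hU.diff hF)).const_mul 2
  have hmono := integral_mono (hU_int.sub hsdiff_int) hψ_int hψ_lower
  simp only [Pi.sub_apply] at hmono
  rw [integral_sub hU_int hsdiff_int, integral_const_mul, integral_indicator_one hU,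
    integral_indicator_one (hU.diff hF)] at hmono
  linarith

lemma exists_isClosed_subset_sdiff_measureReal_sdiff_lt {X : Type*} [TopologicalSpace X]
    [MeasurableSpace X] [OpensMeasurableSpace X] {P Q : Measure X} [IsFiniteMeasure Q]
    [Q.WeaklyRegular] (hPQ : P ≤ Q) {A Z : Set X} (hA : MeasurableSet A) (hZ : MeasurableSet Z)
    (hPZ : P Z = 0) {ε : ℝ} (hε : 0 < ε) :
    ∃ F ⊆ A \ Z, IsClosed F ∧ P.real (A \ F) < ε := by
  obtain ⟨F, hF_sub, hF, hF_lt⟩ := (hA.diff hZ).exists_isClosed_sdiff_lt (measure_ne_top Q _)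
    (ENNReal.ofReal_pos.2 hε).ne'
  refine ⟨F, hF_sub, hF, ENNReal.toReal_lt_of_lt_ofReal ?_⟩
  calc P (A \ F) = P ((A \ Z) \ F) := by rw [sdiff_right_comm, measure_sdiff_null hPZ]
    _ ≤ Q ((A \ Z) \ F) := hPQ _
    _ < ENNReal.ofReal ε := hF_lt

section OpenSets

variable {X : Type*} [TopologicalSpace X] [NormalSpace X] [MeasurableSpace X]
  [OpensMeasurableSpace X]

lemma exists_boundedContinuous_lt_jordanIntegral (ν : SignedMeasure X)
    [ν.totalVariation.WeaklyRegular] {U : Set X} (hU : IsOpen U) {c : ℝ}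
    (hc : c < ν.totalVariation.real U) :
    ∃ ψ : X →ᵇ ℝ, (∀ x, |ψ x| ≤ U.indicator 1 x) ∧ c < jordanIntegral ν ψ := by
  obtain ⟨ε, hε, hεc⟩ : ∃ ε > 0, c + 4 * ε < ν.totalVariation.real U :=
    ⟨(ν.totalVariation.real U - c) / 5, by linarith, by linarith⟩
  set P := ν.toJordanDecomposition.posPart
  set N := ν.toJordanDecomposition.negPart
  obtain ⟨S, hS, hPS, hNS⟩ := ν.toJordanDecomposition.mutuallySingular
  have hP_le : P ≤ ν.totalVariation := Measure.le_add_right le_rfl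
  have hN_le : N ≤ ν.totalVariation := Measure.le_add_left le_rfl
  obtain ⟨F, hF_sub, hF, hF_lt⟩ :=
    exists_isClosed_subset_sdiff_measureReal_sdiff_lt hP_le hU.measurableSet hS hPS hε
  obtain ⟨G, hG_sub, hG, hG_lt⟩ :=
    exists_isClosed_subset_sdiff_measureReal_sdiff_lt hN_le hU.measurableSet hS.compl hNS hε
  have hFU : F ⊆ U := hF_sub.trans Set.sdiff_subset
  have hGU : G ⊆ U := hG_sub.trans Set.sdiff_subset
  have hFG : Disjoint F G := Set.disjoint_left.2 fun x hxF hxG => (hG_sub hxG).2 (hF_sub hxF).2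
  obtain ⟨ψ, hψF, hψG, hψ⟩ :=
    exists_boundedContinuous_eqOn_one_eqOn_neg_one hF hG hU hFG hFU hGU
  have hP := measureReal_le_integral_add_two_mul_measureReal_sdiff (ψ.integrable P)
    hF.measurableSet hU.measurableSet hψF fun x => neg_le_of_abs_le (hψ x)
  have hN := measureReal_le_integral_add_two_mul_measureReal_sdiff ((-ψ).integrable N)
    hG.measurableSet hU.measurableSet (fun x hx => by simp [hψG hx])
    fun x => neg_le_neg (le_of_abs_le (hψ x))
  have hPN : ν.totalVariation.real U = P.real U + N.real U := measureReal_add_apply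
  simp only [BoundedContinuousFunction.coe_neg, Pi.neg_apply, integral_neg] at hN
  refine ⟨ψ, hψ, ?_⟩
  rw [jordanIntegral]
  linarith

lemma totalVariation_le_liminf_totalVariation_of_isOpen {ι : Type*} {L : Filter ι}
    {μ : ι → SignedMeasure X} {ν : SignedMeasure X} [ν.totalVariation.WeaklyRegular]
    (hweak : ∀ ψ : X →ᵇ ℝ,
      Tendsto (fun i => jordanIntegral (μ i) ψ) L (𝓝 (jordanIntegral ν ψ)))
    {U : Set X} (hU : IsOpen U) :
    ν.totalVariation U ≤ liminf (fun i => (μ i).totalVariation U) L := by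
  rw [le_liminf_iff]
  intro c hc
  obtain ⟨ψ, hψ, hcψ⟩ := exists_boundedContinuous_lt_jordanIntegral ν hU
    ((ENNReal.toReal_lt_toReal hc.ne_top (measure_ne_top _ _)).2 hc)
  filter_upwards [(hweak ψ).eventually_const_lt hcψ] with i hi
  calc c < ENNReal.ofReal (jordanIntegral (μ i) ψ) :=
        (ENNReal.lt_ofReal_iff_toReal_lt hc.ne_top).2 hi
    _ ≤ ‖jordanIntegral (μ i) ψ‖ₑ := Real.ofReal_le_enorm _
    _ ≤ (μ i).totalVariation U := enorm_jordanIntegral_le_totalVariation (μ i) hψ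

end OpenSets

lemma lintegral_le_liminf_lintegral_of_lowerSemicontinuous {X ι : Type*}
    [TopologicalSpace X] [MeasurableSpace X] [OpensMeasurableSpace X] {L : Filter ι}
    [L.IsCountablyGenerated] {μ : ι → Measure X} {ν : Measure X} {φ : X → ℝ}
    (hφ : LowerSemicontinuous φ) (hφ_nonneg : 0 ≤ φ)
    (hopen : ∀ U, IsOpen U → ν U ≤ liminf (fun i => μ i U) L) :
    ∫⁻ x, ENNReal.ofReal (φ x) ∂ν ≤ liminf (fun i => ∫⁻ x, ENNReal.ofReal (φ x) ∂μ i) L := by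
  have layercake (m : Measure X) :
      ∫⁻ x, ENNReal.ofReal (φ x) ∂m = ∫⁻ t in Set.Ioi 0, m {x | t < φ x} :=
    lintegral_eq_lintegral_meas_lt m (.of_forall hφ_nonneg) hφ.measurable.aemeasurable
  have measurable_superlevel (i : ι) : Measurable fun t => μ i {x | t < φ x} :=
    Antitone.measurable fun _ _ hst => measure_mono fun _ => hst.trans_lt
  simp_rw [layercake]
  calc ∫⁻ t in Set.Ioi 0, ν {x | t < φ x}
      ≤ ∫⁻ t in Set.Ioi 0, liminf (fun i => μ i {x | t < φ x}) L :=
        lintegral_mono fun t => hopen _ (hφ.isOpen_preimage t)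
    _ ≤ liminf (fun i => ∫⁻ t in Set.Ioi 0, μ i {x | t < φ x}) L :=
        lintegral_liminf_le measurable_superlevel

theorem weighted_tv_lsc_of_weak_convergence_general {X ι : Type*} [TopologicalSpace X]
    [NormalSpace X] [MeasurableSpace X] [OpensMeasurableSpace X] {L : Filter ι}
    [L.IsCountablyGenerated] {φ : X → ℝ} (hφ : LowerSemicontinuous φ) (hφ_nonneg : 0 ≤ φ)
    {μ : ι → SignedMeasure X} {ν : SignedMeasure X} [ν.totalVariation.WeaklyRegular]
    (hweak : ∀ ψ : X →ᵇ ℝ,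
      Tendsto (fun i => jordanIntegral (μ i) ψ) L (𝓝 (jordanIntegral ν ψ))) :
    ∫⁻ x, ENNReal.ofReal (φ x) ∂ν.totalVariation ≤
      liminf (fun i => ∫⁻ x, ENNReal.ofReal (φ x) ∂(μ i).totalVariation) L :=
  lintegral_le_liminf_lintegral_of_lowerSemicontinuous hφ hφ_nonneg
    fun _ hU => totalVariation_le_liminf_totalVariation_of_isOpen hweak hU

/-- Lower semicontinuity of the `φ`-weighted total variation with respect to weak
convergence of finite signed Borel measures on `ℝ^d`.  Here, for a signed measure `ν`,
`∫ ψ dν := ∫ ψ dν⁺ − ∫ ψ dν⁻` via the Jordan decomposition, the weighted total variation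
`‖ν‖_φ` is `∫⁻ φ d|ν|` (with `|ν|` the total variation measure), and weak convergence
means convergence of integrals of all bounded continuous functions. -/
theorem weighted_tv_lsc_of_weak_convergence {d : ℕ}
    (φ : (Fin d → ℝ) → ℝ) (hφc : Continuous φ) (hφpos : ∀ y, 0 < φ y)
    (μ : ℕ → SignedMeasure (Fin d → ℝ)) (ν : SignedMeasure (Fin d → ℝ))
    (hweak : ∀ ψ : BoundedContinuousFunction (Fin d → ℝ) ℝ,
      Tendsto
        (fun n =>
          (∫ y, ψ y ∂(μ n).toJordanDecomposition.posPart) -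
            ∫ y, ψ y ∂(μ n).toJordanDecomposition.negPart)
        atTop
        (nhds ((∫ y, ψ y ∂ν.toJordanDecomposition.posPart) -
          ∫ y, ψ y ∂ν.toJordanDecomposition.negPart)))
    (hφint : Integrable φ ν.totalVariation) :
    (∫⁻ y, ENNReal.ofReal (φ y) ∂ν.totalVariation) ≤
      liminf (fun n => ∫⁻ y, ENNReal.ofReal (φ y) ∂(μ n).totalVariation) atTop :=
  weighted_tv_lsc_of_weak_convergence_general hφc.lowerSemicontinuous (fun y => (hφpos y).le) hweak
end

section
/- Let T > 0, let h : [0,T] → [0,∞) be Lebesgue integrable, and let g : [0,∞) → [0,∞) be increasing with g(u) > 0 for u > 0 and ∫_0^ε du/g(u) = ∞ for every ε > 0. Suppose S : [0,T] → [0,∞) is nondecreasing and satisfies S(t) ≤ ∫_0^t h(s) g(S(s)) ds for all t ∈ [0,T]. Then S(t) = 0 for all t ∈ [0,T]. -/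
open MeasureTheory

/-!
Put `V t = ∫ s in a..t, h s * g (S s) ∂μ`. Since `V` is continuous and nondecreasing with `V a = 0`,
it pushes the measure `h s * g (S s) ∂μ(s)` on `(a, b]` forward to Lebesgue measure on `(0, V b]`.
Substituting `u = V s` and using `g (S s) ≤ g (V s)` therefore gives
`∫ u in (0, V b], 1 / g u = ∫ s in (a, b], h s * g (S s) / g (V s) ∂μ ≤ ∫ s in (a, b], h s ∂μ < ∞`,
which contradicts the divergence of the left-hand side unless `V b = 0`. Working with the
push-forward instead of the chain rule avoids any differentiability of `V`.
-/

open Set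
open scoped ENNReal

theorem exists_Ioc_inter_preimage_Iic_eq {α β : Type*}
    [ConditionallyCompleteLinearOrder α] [TopologicalSpace α] [OrderTopology α] [DenselyOrdered α]
    [LinearOrder β] [TopologicalSpace β] [OrderClosedTopology β] {f : α → β} {a b : α} {c : β}
    (hab : a ≤ b) (hmono : MonotoneOn f (Icc a b)) (hcont : ContinuousOn f (Icc a b))
    (hc : f a ≤ c) :
    ∃ τ ∈ Icc a b, f τ = f b ⊓ c ∧ Ioc a b ∩ f ⁻¹' Iic c = Ioc a τ := by
  have hcompact : IsCompact (Icc a b ∩ f ⁻¹' Iic c) :=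
    isCompact_Icc.of_isClosed_subset
      (hcont.preimage_isClosed_of_isClosed isClosed_Icc isClosed_Iic) inter_subset_left
  obtain ⟨τ, ⟨hτ, hfτ⟩, hgreatest⟩ := hcompact.exists_isGreatest ⟨a, left_mem_Icc.2 hab, hc⟩
  have hb : b ∈ Icc a b := right_mem_Icc.2 hab
  refine ⟨τ, hτ, le_antisymm (le_inf (hmono hτ hb hτ.2) hfτ) ?_, ?_⟩
  · obtain ⟨t, ht, hft⟩ : f b ⊓ c ∈ f '' Icc τ b :=
      intermediate_value_Icc hτ.2 (hcont.mono (Icc_subset_Icc_left hτ.1))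
        ⟨le_inf (hmono hτ hb hτ.2) hfτ, inf_le_left⟩
    have ht' : t ∈ Icc a b := ⟨hτ.1.trans ht.1, ht.2⟩
    exact hft ▸ hmono ht' hτ (hgreatest ⟨ht', hft.trans_le inf_le_right⟩)
  · refine Subset.antisymm (fun t ht => ⟨ht.1.1, hgreatest ⟨Ioc_subset_Icc_self ht.1, ht.2⟩⟩) ?_
    exact fun t ht => ⟨⟨ht.1, ht.2.trans hτ.2⟩,
      (hmono ⟨ht.1.le, ht.2.trans hτ.2⟩ hτ ht.2).trans hfτ⟩

section Substitution

variable {μ : Measure ℝ} {f : ℝ → ℝ} {a b : ℝ}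

theorem monotoneOn_primitive (hf : IntervalIntegrable f μ a b)
    (hf0 : 0 ≤ᵐ[μ.restrict (Ioc a b)] f) :
    MonotoneOn (fun t => ∫ s in a..t, f s ∂μ) (Icc a b) := by
  intro x hx y hy hxy
  have hsub : Ioc a y ⊆ Ioc a b := Ioc_subset_Ioc_right hy.2
  exact intervalIntegral.integral_mono_interval le_rfl hx.1 hxy
    (ae_restrict_of_ae_restrict_of_subset hsub hf0)
    (hf.mono_set (uIcc_subset_uIcc_left (Icc_subset_uIcc hy)))

theorem setLIntegral_Ioc_ofReal (hab : a ≤ b) (hf : IntervalIntegrable f μ a b)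
    (hf0 : 0 ≤ᵐ[μ.restrict (Ioc a b)] f) :
    ∫⁻ s in Ioc a b, ENNReal.ofReal (f s) ∂μ = ENNReal.ofReal (∫ s in a..b, f s ∂μ) := by
  rw [intervalIntegral.integral_of_le hab, ofReal_integral_eq_lintegral_ofReal hf.1 hf0]

variable [NullSingletonClass μ]

theorem map_primitive_withDensity (hab : a ≤ b) (hf : IntervalIntegrable f μ a b)
    (hf0 : 0 ≤ᵐ[μ.restrict (Ioc a b)] f) :
    ((μ.restrict (Ioc a b)).withDensity fun s => ENNReal.ofReal (f s)).map
        (fun t => ∫ s in a..t, f s ∂μ) =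
      volume.restrict (Ioc 0 (∫ s in a..b, f s ∂μ)) := by
  set V : ℝ → ℝ := fun t => ∫ s in a..t, f s ∂μ
  have hVa : V a = 0 := intervalIntegral.integral_same
  have hVmono : MonotoneOn V (Icc a b) := monotoneOn_primitive hf hf0
  have hVcont : ContinuousOn V (Icc a b) := by
    simpa only [uIcc_of_le hab] using
      intervalIntegral.continuousOn_primitive_interval' hf left_mem_uIcc
  have hVmeas : AEMeasurable V (μ.restrict (Ioc a b)) :=
    aemeasurable_restrict_of_monotoneOn measurableSet_Ioc (hVmono.mono Ioc_subset_Icc_self)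
  have := isFiniteMeasure_withDensity_ofReal hf.1.2
  refine Measure.ext_of_Iic _ _ fun c => ?_
  rw [Measure.map_apply_of_aemeasurable (hVmeas.mono_ac (withDensity_absolutelyContinuous _ _))
      measurableSet_Iic, withDensity_apply₀ _ (hVmeas.nullMeasurable measurableSet_Iic),
    Measure.restrict_restrict' measurableSet_Ioc, Measure.restrict_apply measurableSet_Iic,
    inter_comm, inter_comm (Iic c), Ioc_inter_Iic]
  rcases lt_or_ge c 0 with hc | hc
  · have hempty : Ioc a b ∩ V ⁻¹' Iic c = ∅ := eq_empty_of_forall_notMem fun t ht =>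
      (hc.trans_le (hVa ▸ hVmono (left_mem_Icc.2 hab) (Ioc_subset_Icc_self ht.1) ht.1.1.le)).not_ge
        ht.2
    rw [hempty, Measure.restrict_empty, lintegral_zero_measure,
      Ioc_eq_empty (inf_le_right.trans hc.le).not_gt, measure_empty]
  · obtain ⟨τ, hτ, hVτ, hsublevel⟩ :=
      exists_Ioc_inter_preimage_Iic_eq hab hVmono hVcont (hVa.trans_le hc)
    have hfτ : IntervalIntegrable f μ a τ :=
      hf.mono_set (uIcc_subset_uIcc_left (Icc_subset_uIcc hτ))
    have hf0τ : 0 ≤ᵐ[μ.restrict (Ioc a τ)] f :=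
      ae_restrict_of_ae_restrict_of_subset (Ioc_subset_Ioc_right hτ.2) hf0
    rw [hsublevel, setLIntegral_Ioc_ofReal hτ.1 hfτ hf0τ, Real.volume_Ioc, sub_zero]
    exact congrArg ENNReal.ofReal hVτ

theorem setLIntegral_comp_primitive (hab : a ≤ b) (hf : IntervalIntegrable f μ a b)
    (hf0 : 0 ≤ᵐ[μ.restrict (Ioc a b)] f) {φ : ℝ → ℝ≥0∞}
    (hφ : AEMeasurable φ (volume.restrict (Ioc 0 (∫ s in a..b, f s ∂μ)))) :
    ∫⁻ u in Ioc 0 (∫ s in a..b, f s ∂μ), φ u =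
      ∫⁻ t in Ioc a b, ENNReal.ofReal (f t) * φ (∫ s in a..t, f s ∂μ) ∂μ := by
  have hVmeas : AEMeasurable (fun t => ∫ s in a..t, f s ∂μ)
      ((μ.restrict (Ioc a b)).withDensity fun s => ENNReal.ofReal (f s)) :=
    (aemeasurable_restrict_of_monotoneOn measurableSet_Ioc
      ((monotoneOn_primitive hf hf0).mono Ioc_subset_Icc_self)).mono_ac
      (withDensity_absolutelyContinuous _ _)
  rw [← map_primitive_withDensity hab hf hf0] at hφ ⊢
  rw [lintegral_map' hφ hVmeas, lintegral_withDensity_eq_lintegral_mul₀'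
    hf.1.aestronglyMeasurable.aemeasurable.ennreal_ofReal (g := fun t => φ (∫ s in a..t, f s ∂μ))
    (hφ.comp_aemeasurable hVmeas)]
  rfl

end Substitution

section Osgood

variable {μ : Measure ℝ} [NullSingletonClass μ] {a b : ℝ} {h g S : ℝ → ℝ}

theorem setLIntegral_inv_le_of_le_integral_mul_comp (hab : a ≤ b)
    (hh0 : ∀ s ∈ Icc a b, 0 ≤ h s) (hg0 : ∀ u, 0 ≤ u → 0 ≤ g u) (hgmono : MonotoneOn g (Ici 0))
    (hS0 : ∀ t ∈ Icc a b, 0 ≤ S t)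
    (hint : IntegrableOn (fun s => h s * g (S s)) (Icc a b) μ)
    (hS : ∀ t ∈ Icc a b, S t ≤ ∫ s in a..t, h s * g (S s) ∂μ) :
    ∫⁻ u in Ioc 0 (∫ s in a..b, h s * g (S s) ∂μ), (ENNReal.ofReal (g u))⁻¹ ≤
      ∫⁻ s in Ioc a b, ENNReal.ofReal (h s) ∂μ := by
  have hf0 : 0 ≤ᵐ[μ.restrict (Ioc a b)] fun s => h s * g (S s) := by
    filter_upwards [ae_restrict_mem measurableSet_Ioc] with s hs
    exact mul_nonneg (hh0 s (Ioc_subset_Icc_self hs)) (hg0 _ (hS0 s (Ioc_subset_Icc_self hs)))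
  have hgmeas : AEMeasurable (fun u => (ENNReal.ofReal (g u))⁻¹)
      (volume.restrict (Ioc 0 (∫ s in a..b, h s * g (S s) ∂μ))) :=
    (aemeasurable_restrict_of_monotoneOn measurableSet_Ioc
      (hgmono.mono fun _ hu => hu.1.le)).ennreal_ofReal.inv
  rw [setLIntegral_comp_primitive hab
    ((intervalIntegrable_iff_integrableOn_Icc_of_le hab).2 hint) hf0 hgmeas]
  refine setLIntegral_mono' measurableSet_Ioc fun t ht => ?_
  have ht' : t ∈ Icc a b := Ioc_subset_Icc_self ht
  have hSV := hS t ht'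
  have hgle : g (S t) ≤ g (∫ s in a..t, h s * g (S s) ∂μ) :=
    hgmono (hS0 t ht') ((hS0 t ht').trans hSV) hSV
  rw [ENNReal.ofReal_mul (hh0 t ht'), mul_assoc, ← div_eq_mul_inv]
  exact mul_le_of_le_one_right' <|
    ENNReal.div_le_of_le_mul ((ENNReal.ofReal_le_ofReal hgle).trans_eq (one_mul _).symm)

theorem osgood_zero_general (hh0 : ∀ s ∈ Icc a b, 0 ≤ h s) (hh : IntegrableOn h (Icc a b) μ)
    (hg0 : ∀ u, 0 ≤ u → 0 ≤ g u) (hgmono : MonotoneOn g (Ici 0))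
    (hosgood : ∀ ε : ℝ, 0 < ε → ∫⁻ u in Ioc 0 ε, (ENNReal.ofReal (g u))⁻¹ = ∞)
    (hS0 : ∀ t ∈ Icc a b, 0 ≤ S t) (hint : IntegrableOn (fun s => h s * g (S s)) (Icc a b) μ)
    (hS : ∀ t ∈ Icc a b, S t ≤ ∫ s in a..t, h s * g (S s) ∂μ) :
    ∀ t ∈ Icc a b, S t = 0 := by
  intro t ht
  by_contra hne
  have hV : 0 < ∫ s in a..t, h s * g (S s) ∂μ :=
    ((hS0 t ht).lt_of_ne' hne).trans_le (hS t ht)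
  have hsub : Icc a t ⊆ Icc a b := Icc_subset_Icc_right ht.2
  have hle := setLIntegral_inv_le_of_le_integral_mul_comp ht.1 (fun s hs => hh0 s (hsub hs)) hg0
    hgmono (fun s hs => hS0 s (hsub hs)) (hint.mono_set hsub) (fun s hs => hS s (hsub hs))
  have hfin : ∫⁻ s in Ioc a t, ENNReal.ofReal (h s) ∂μ < ∞ :=
    (hh.mono_set (Ioc_subset_Icc_self.trans hsub)).lintegral_lt_top
  exact (hle.trans_lt hfin).ne (hosgood _ hV)

end Osgood

/-- Osgood-type uniqueness lemma: if `h : [0,T] → [0,∞)` is Lebesgue integrable,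
`g : [0,∞) → [0,∞)` is increasing with `g(u) > 0` for `u > 0` and
`∫_0^ε du/g(u) = ∞` for every `ε > 0`, and `S : [0,T] → [0,∞)` is nondecreasing with
`S(t) ≤ ∫_0^t h(s) g(S(s)) ds` for all `t ∈ [0,T]`, then `S ≡ 0` on `[0,T]`. -/
theorem osgood_zero (T : ℝ) (hT : 0 < T)
    (h : ℝ → ℝ) (hh0 : ∀ s, 0 ≤ h s) (hhint : IntegrableOn h (Set.Icc 0 T) volume)
    (g : ℝ → ℝ) (hg0 : ∀ u, 0 ≤ u → 0 ≤ g u) (hgpos : ∀ u, 0 < u → 0 < g u)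
    (hgmono : MonotoneOn g (Set.Ici 0))
    (hosgood : ∀ ε : ℝ, 0 < ε →
      (∫⁻ u in Set.Ioc (0 : ℝ) ε, ENNReal.ofReal (1 / g u)) = ⊤)
    (S : ℝ → ℝ) (hS0 : ∀ t ∈ Set.Icc (0 : ℝ) T, 0 ≤ S t)
    (hSmono : MonotoneOn S (Set.Icc 0 T))
    (hS : ∀ t ∈ Set.Icc (0 : ℝ) T, S t ≤ ∫ s in (0 : ℝ)..t, h s * g (S s)) :
    ∀ t ∈ Set.Icc (0 : ℝ) T, S t = 0 := by
  have hint : IntegrableOn (fun s => h s * g (S s)) (Icc 0 T) :=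
    hhint.mul_of_top_left ((hgmono.comp hSmono hS0).memLp_isCompact isCompact_Icc)
  have hosgood_inv : ∀ ε : ℝ, 0 < ε → ∫⁻ u in Ioc 0 ε, (ENNReal.ofReal (g u))⁻¹ = ∞ := fun ε hε =>
    top_unique ((hosgood ε hε).ge.trans (lintegral_mono fun u =>
      one_div (g u) ▸ ENNReal.ofReal_inv_le))
  exact osgood_zero_general (fun s _ => hh0 s) hhint hg0 hgmono hosgood_inv hS0 hint hS
end

section
/- Let T > 0, let h : [0,T] → [0,∞) be Lebesgue integrable, let g : [0,∞) → [0,∞) be increasing with g(u) > 0 for u > 0, and let f : [0,T] → [0,∞) be measurable and integrable with f(s) ≤ h(s) g(F(s)) for almost every s ∈ [0,T], where F(t) := ∫_0^t f(s) ds. Then for every t ∈ [0,T] one has ∫_0^{F(t)} du/g(u) ≤ ∫_0^t h(s) ds. -/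
open MeasureTheory

/-!
If `μ` is a finite measure on `ℝ` without point masses, then `x ↦ μ (Iic x)` pushes `μ` forward to
Lebesgue measure on `[0, μ univ]`. Applied to the measure `f ds` on `[0, t]`, whose distribution
function is `F`, this is the substitution `u = F s`, so that
`∫_0^{F t} du / g u ≤ ∫_0^t f s / g (F s) ds`, and the right-hand integrand is at most `h`.
Division by `g (F s)` takes place in `[0, ∞]`, so it is harmless where `g (F s) = 0`: there `f s`
vanishes too, and `0 * ∞ = 0`.
-/

open Set Filter
open scoped ENNReal Topology

lemma exists_preimage_Iic_eq_Iic {α β : Type*}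
    [ConditionallyCompleteLinearOrder α] [TopologicalSpace α] [OrderTopology α] [DenselyOrdered α]
    [LinearOrder β] [TopologicalSpace β] [OrderClosedTopology β]
    {F : α → β} (hmono : Monotone F) (hcont : Continuous F) {x y : α} {a : β}
    (hx : F x ≤ a) (hy : a < F y) : ∃ c, F ⁻¹' Iic a = Iic c ∧ F c = a := by
  have hbdd : BddAbove (F ⁻¹' Iic a) :=
    ⟨y, fun z hz => (hmono.reflect_lt ((mem_preimage.1 hz).trans_lt hy)).le⟩
  have hclosed : IsClosed (F ⁻¹' Iic a) := isClosed_Iic.preimage hcont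
  have hpre : F ⁻¹' Iic a = Iic (sSup (F ⁻¹' Iic a)) := by
    rw [← lowerClosure_eq_Iic_csSup ⟨x, hx⟩ hbdd hclosed]
    exact (((isLowerSet_Iic a).preimage hmono).lowerClosure).symm
  obtain ⟨d, hd⟩ := mem_range_of_exists_le_of_exists_ge hcont ⟨x, hx⟩ ⟨y, hy.le⟩
  have hle : F (sSup (F ⁻¹' Iic a)) ≤ a := hclosed.csSup_mem ⟨x, hx⟩ hbdd
  exact ⟨_, hpre, hle.antisymm (hd.ge.trans (hmono (le_csSup hbdd hd.le)))⟩

lemma Iic_inter_Icc {α : Type*} [SemilatticeInf α] (a b c : α) :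
    Iic a ∩ Icc b c = Icc b (a ⊓ c) := by
  rw [← Ici_inter_Iic, inter_left_comm, Iic_inter_Iic, Ici_inter_Iic]

section DistributionFunction

section Order

variable {α : Type*} [MeasurableSpace α] (μ : Measure α) [IsFiniteMeasure μ]

lemma monotone_measureReal_Iic [Preorder α] : Monotone fun x => μ.real (Iic x) :=
  fun _ _ hxy => measureReal_mono (Iic_subset_Iic.2 hxy)

lemma tendsto_measureReal_Iic_atBot [LinearOrder α] [NoMinOrder α] [Nonempty α]
    [TopologicalSpace α] [ClosedIicTopology α] [OpensMeasurableSpace α]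
    [(atBot : Filter α).IsCountablyGenerated] :
    Tendsto (fun x => μ.real (Iic x)) atBot (𝓝 0) := by
  have hlim := tendsto_measure_iInter_atBot (μ := μ) (fun x : α => nullMeasurableSet_Iic (a := x))
    (fun _ _ => Iic_subset_Iic.2) ⟨Classical.arbitrary α, measure_ne_top _ _⟩
  rw [iInter_Iic_eq_empty_iff.2 (by simp), measure_empty] at hlim
  exact (ENNReal.tendsto_toReal ENNReal.zero_ne_top).comp hlim

lemma tendsto_measureReal_Iic_atTop [Preorder α] [(atTop : Filter α).IsCountablyGenerated] :
    Tendsto (fun x => μ.real (Iic x)) atTop (𝓝 (μ.real univ)) :=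
  (ENNReal.tendsto_toReal (measure_ne_top _ _)).comp (tendsto_measure_Iic_atTop μ)

end Order

variable (μ : Measure ℝ) [IsFiniteMeasure μ] [NullSingletonClass μ]

lemma continuous_measureReal_Iic : Continuous fun x => μ.real (Iic x) := by
  have hsplit (x : ℝ) : μ.real (Iic x) = μ.real (Iic 0) + ∫ _ in (0 : ℝ)..x, (1 : ℝ) ∂μ := by
    rw [← intervalIntegral.integral_Iic_sub_Iic (integrable_const _).integrableOn
      (integrable_const _).integrableOn]
    simp
  rw [funext hsplit]
  exact continuous_const.add ((integrable_const 1).continuous_primitive 0)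

lemma measure_setOf_measureReal_Iic_le (a : ℝ) :
    μ {x | μ.real (Iic x) ≤ a} = ENNReal.ofReal (min a (μ.real univ)) := by
  rcases le_or_gt (μ.real univ) a with hau | hau
  · have huniv : {x | μ.real (Iic x) ≤ a} = univ :=
      eq_univ_of_forall fun x => (measureReal_mono (subset_univ _)).trans hau
    rw [huniv, min_eq_right hau, ofReal_measureReal]
  obtain ⟨y, hy⟩ := ((tendsto_measureReal_Iic_atTop μ).eventually_const_lt hau).exists
  rw [min_eq_left hau.le]
  by_cases hne : ∃ x, μ.real (Iic x) ≤ a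
  · obtain ⟨x, hx⟩ := hne
    obtain ⟨c, hpre, hc⟩ := exists_preimage_Iic_eq_Iic (monotone_measureReal_Iic μ)
      (continuous_measureReal_Iic μ) hx hy
    change μ ((fun x => μ.real (Iic x)) ⁻¹' Iic a) = _
    rw [hpre, ← hc, ofReal_measureReal]
  · push Not at hne
    have ha0 : a ≤ 0 :=
      ge_of_tendsto (tendsto_measureReal_Iic_atBot μ) (.of_forall fun x => (hne x).le)
    have hempty : {x | μ.real (Iic x) ≤ a} = ∅ :=
      eq_empty_of_forall_notMem fun x => (hne x).not_ge
    rw [hempty, measure_empty, ENNReal.ofReal_of_nonpos ha0]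

theorem map_measureReal_Iic :
    μ.map (fun x => μ.real (Iic x)) = volume.restrict (Icc 0 (μ.real univ)) := by
  refine Measure.ext_of_Iic _ _ fun a => ?_
  rw [Measure.map_apply (continuous_measureReal_Iic μ).measurable measurableSet_Iic,
    Measure.restrict_apply measurableSet_Iic]
  change μ {x | μ.real (Iic x) ≤ a} = _
  rw [measure_setOf_measureReal_Iic_le, Iic_inter_Icc, Real.volume_Icc, sub_zero]

end DistributionFunction

section Primitive

variable {μ : Measure ℝ} [NullSingletonClass μ]

/-- Only an inequality, since `φ` need not be measurable. -/
lemma setLIntegral_Icc_le_lintegral_mul_comp_primitive {f : ℝ → ℝ≥0∞} (hf : AEMeasurable f μ)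
    (hfi : ∫⁻ x, f x ∂μ ≠ ∞) (φ : ℝ → ℝ≥0∞) :
    ∫⁻ u in Icc 0 (∫⁻ x, f x ∂μ).toReal, φ u ≤
      ∫⁻ x, f x * φ (∫⁻ y in Iic x, f y ∂μ).toReal ∂μ := by
  have : IsFiniteMeasure (μ.withDensity f) := isFiniteMeasure_withDensity hfi
  have hreal {s : Set ℝ} (hs : MeasurableSet s) :
      (μ.withDensity f).real s = (∫⁻ y in s, f y ∂μ).toReal := by
    rw [measureReal_def, withDensity_apply f hs]
  calc ∫⁻ u in Icc 0 (∫⁻ x, f x ∂μ).toReal, φ u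
      = ∫⁻ u, φ u ∂(μ.withDensity f).map fun x => (μ.withDensity f).real (Iic x) := by
        rw [map_measureReal_Iic, hreal .univ, Measure.restrict_univ]
    _ ≤ ∫⁻ x, φ ((μ.withDensity f).real (Iic x)) ∂μ.withDensity f := lintegral_map_le _ _
    _ = ∫⁻ x, f x * φ (∫⁻ y in Iic x, f y ∂μ).toReal ∂μ := by
        simp_rw [hreal measurableSet_Iic]
        exact lintegral_withDensity_eq_lintegral_mul_non_measurable₀ μ hf
          (ae_lt_top' hf hfi) _

theorem setLIntegral_inv_le_of_le_mul_comp_primitive {f g h : ℝ → ℝ≥0∞} (hf : AEMeasurable f μ)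
    (hfi : ∫⁻ x, f x ∂μ ≠ ∞)
    (hfg : ∀ᵐ x ∂μ, f x ≤ h x * g (∫⁻ y in Iic x, f y ∂μ).toReal) :
    ∫⁻ u in Icc 0 (∫⁻ x, f x ∂μ).toReal, (g u)⁻¹ ≤ ∫⁻ x, h x ∂μ :=
  (setLIntegral_Icc_le_lintegral_mul_comp_primitive hf hfi fun u => (g u)⁻¹).trans <|
    lintegral_mono_ae <| hfg.mono fun _ hx => ENNReal.div_le_of_le_mul hx

lemma intervalIntegral_eq_toReal_setLIntegral_Iic {f : ℝ → ℝ} {a b s : ℝ}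
    (hf0 : 0 ≤ᵐ[μ.restrict (Icc a b)] f) (hf : IntegrableOn f (Icc a b) μ) (hs : s ∈ Icc a b) :
    ∫ x in a..s, f x ∂μ =
      (∫⁻ x in Iic s, ENNReal.ofReal (f x) ∂μ.restrict (Icc a b)).toReal := by
  have hsub : Icc a s ⊆ Icc a b := Icc_subset_Icc_right hs.2
  rw [Measure.restrict_restrict measurableSet_Iic, Iic_inter_Icc, inf_eq_left.2 hs.2,
    intervalIntegral.integral_of_le hs.1, ← integral_Icc_eq_integral_Ioc,
    integral_eq_lintegral_of_nonneg_ae (ae_restrict_of_ae_restrict_of_subset hsub hf0)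
      (hf.mono_set hsub).aestronglyMeasurable]

lemma setLIntegral_inv_le_of_le_mul_comp_intervalIntegral {f g h : ℝ → ℝ} {a b : ℝ} (hab : a ≤ b)
    (hh0 : 0 ≤ᵐ[μ.restrict (Icc a b)] h) (hh : IntegrableOn h (Icc a b) μ)
    (hf0 : 0 ≤ᵐ[μ.restrict (Icc a b)] f) (hf : IntegrableOn f (Icc a b) μ)
    (hfg : ∀ᵐ s ∂μ.restrict (Icc a b), f s ≤ h s * g (∫ x in a..s, f x ∂μ)) :
    ∫⁻ u in Icc 0 (∫ s in a..b, f s ∂μ), (ENNReal.ofReal (g u))⁻¹ ≤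
      ENNReal.ofReal (∫ s in a..b, h s ∂μ) := by
  have htotal (k : ℝ → ℝ) : ∫ s in a..b, k s ∂μ = ∫ s in Icc a b, k s ∂μ := by
    rw [intervalIntegral.integral_of_le hab, integral_Icc_eq_integral_Ioc]
  rw [htotal, htotal, ofReal_integral_eq_lintegral_ofReal hh hh0,
    integral_eq_lintegral_of_nonneg_ae hf0 hf.aestronglyMeasurable]
  refine setLIntegral_inv_le_of_le_mul_comp_primitive (g := fun u => ENNReal.ofReal (g u))
    hf.aemeasurable.ennreal_ofReal hf.lintegral_lt_top.ne ?_
  filter_upwards [hfg, hh0, ae_restrict_mem measurableSet_Icc] with s hfs hhs hs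
  rw [← intervalIntegral_eq_toReal_setLIntegral_Iic hf0 hf hs, ← ENNReal.ofReal_mul hhs]
  exact ENNReal.ofReal_le_ofReal hfs

theorem bihari_estimate_general {f g h : ℝ → ℝ} {a b : ℝ}
    (hh0 : 0 ≤ᵐ[μ.restrict (Icc a b)] h) (hh : IntegrableOn h (Icc a b) μ)
    (hg : ∀ u, 0 < u → 0 < g u)
    (hf0 : 0 ≤ᵐ[μ.restrict (Icc a b)] f) (hf : IntegrableOn f (Icc a b) μ)
    (hfg : ∀ᵐ s ∂μ.restrict (Icc a b), f s ≤ h s * g (∫ x in a..s, f x ∂μ))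
    {t : ℝ} (ht : t ∈ Icc a b) :
    ∫⁻ u in Ioo 0 (∫ s in a..t, f s ∂μ), ENNReal.ofReal (1 / g u) ≤
      ENNReal.ofReal (∫ s in a..t, h s ∂μ) := by
  have hsub : Icc a t ⊆ Icc a b := Icc_subset_Icc_right ht.2
  have hrestrict {p : ℝ → Prop} (hp : ∀ᵐ s ∂μ.restrict (Icc a b), p s) :
      ∀ᵐ s ∂μ.restrict (Icc a t), p s := ae_restrict_of_ae_restrict_of_subset hsub hp
  calc ∫⁻ u in Ioo 0 (∫ s in a..t, f s ∂μ), ENNReal.ofReal (1 / g u)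
      = ∫⁻ u in Ioo 0 (∫ s in a..t, f s ∂μ), (ENNReal.ofReal (g u))⁻¹ :=
        setLIntegral_congr_fun measurableSet_Ioo fun u hu => by
          rw [one_div, ENNReal.ofReal_inv_of_pos (hg u hu.1)]
    _ ≤ ∫⁻ u in Icc 0 (∫ s in a..t, f s ∂μ), (ENNReal.ofReal (g u))⁻¹ :=
        lintegral_mono_set Ioo_subset_Icc_self
    _ ≤ ENNReal.ofReal (∫ s in a..t, h s ∂μ) :=
        setLIntegral_inv_le_of_le_mul_comp_intervalIntegral ht.1 (hrestrict hh0)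
          (hh.mono_set hsub) (hrestrict hf0) (hf.mono_set hsub) (hrestrict hfg)

end Primitive

/-- Bihari-type estimate: let `h : [0,T] → [0,∞)` be Lebesgue integrable,
`g : [0,∞) → [0,∞)` increasing with `g(u) > 0` for `u > 0`, and `f : [0,T] → [0,∞)`
measurable and integrable with `f(s) ≤ h(s) g(F(s))` for a.e. `s ∈ [0,T]`, where
`F(t) := ∫_0^t f(s) ds`.  Then `∫_0^{F(t)} du/g(u) ≤ ∫_0^t h(s) ds` for all `t ∈ [0,T]`,
the left-hand side being the (possibly infinite) Lebesgue integral of `1/g` over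
`(0, F(t))`. -/
theorem bihari_estimate (T : ℝ) (hT : 0 < T)
    (h : ℝ → ℝ) (hh0 : ∀ s, 0 ≤ h s) (hhint : IntegrableOn h (Set.Icc 0 T) volume)
    (g : ℝ → ℝ) (hg0 : ∀ u, 0 ≤ u → 0 ≤ g u) (hgpos : ∀ u, 0 < u → 0 < g u)
    (hgmono : MonotoneOn g (Set.Ici 0))
    (f : ℝ → ℝ) (hfm : Measurable f) (hf0 : ∀ s, 0 ≤ f s)
    (hfint : IntegrableOn f (Set.Icc 0 T) volume)
    (F : ℝ → ℝ) (hF : ∀ t, F t = ∫ s in (0 : ℝ)..t, f s)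
    (hfg : ∀ᵐ s ∂(volume.restrict (Set.Icc (0 : ℝ) T)), f s ≤ h s * g (F s)) :
    ∀ t ∈ Set.Icc (0 : ℝ) T,
      (∫⁻ u in Set.Ioo (0 : ℝ) (F t), ENNReal.ofReal (1 / g u)) ≤
        ENNReal.ofReal (∫ s in (0 : ℝ)..t, h s) := by
  obtain rfl : F = fun t => ∫ s in (0 : ℝ)..t, f s := funext hF
  exact fun t => bihari_estimate_general (.of_forall hh0) hhint hgpos (.of_forall hf0) hfint hfg
end
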